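/- arXiv:2405.08692 — 2 statements merged into one kernel-verified Lean document; each statement's English description precedes it below -/
import Mathlib

section
/- Let U ⊆ ℂ⁺ be a nonempty open, connected, simply connected subset of the open upper half-plane whose closure is homeomorphic to the closed unit disc, and set D = U ∪ conj(U). Fix q = a + ib ∈ U. Then there exists a continuous map H : D × [0,1] → D such that H(z,1) = z for all z ∈ D, H(z,0) = a + ib for z ∈ U and H(z,0) = a − ib for z ∈ conj(U), and for every t ∈ [0,1] the map z ↦ H(z,t) is holomorphic on D and satisfies H(conj z, t) = conj(H(z,t)). -/
open Set Metric

open Filter Topology ComplexConjugate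

/-- The Möbius transformation of the unit disc that sends `w` to `0`. -/
noncomputable def discMoebius (w z : ℂ) : ℂ := (z - w) / (1 - conj w * z)

@[simp]
lemma discMoebius_self (w : ℂ) : discMoebius w w = 0 := by simp [discMoebius]

@[simp]
lemma discMoebius_zero (w : ℂ) : discMoebius w 0 = -w := by simp [discMoebius]

lemma one_sub_conj_mul_ne_zero {w z : ℂ} (hw : ‖w‖ < 1) (hz : ‖z‖ < 1) :
    1 - conj w * z ≠ 0 := by
  intro h
  have h1 : ‖conj w * z‖ = 1 := by rw [← sub_eq_zero.mp h, norm_one]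
  rw [norm_mul, RCLike.norm_conj] at h1
  nlinarith [norm_nonneg w, norm_nonneg z]

lemma norm_discMoebius_lt_one {w z : ℂ} (hw : ‖w‖ < 1) (hz : ‖z‖ < 1) :
    ‖discMoebius w z‖ < 1 := by
  rw [discMoebius, norm_div, div_lt_one (norm_pos_iff.mpr (one_sub_conj_mul_ne_zero hw hz))]
  refine lt_of_pow_lt_pow_left₀ 2 (norm_nonneg _) ?_
  have hw2 : ‖w‖ ^ 2 < 1 := by nlinarith [norm_nonneg w]
  have hz2 : ‖z‖ ^ 2 < 1 := by nlinarith [norm_nonneg z]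
  rw [Complex.sq_norm, Complex.normSq_apply] at *
  rw [Complex.sq_norm, Complex.normSq_apply]
  simp only [Complex.sub_re, Complex.sub_im, Complex.mul_re, Complex.mul_im, Complex.conj_re,
    Complex.conj_im, Complex.one_re, Complex.one_im]
  nlinarith [mul_pos (sub_pos.mpr hw2) (sub_pos.mpr hz2)]

lemma discMoebius_injOn {w : ℂ} (hw : ‖w‖ < 1) : InjOn (discMoebius w) (ball 0 1) := by
  intro x hx y hy h
  rw [mem_ball_zero_iff] at hx hy
  rw [discMoebius, discMoebius, div_eq_div_iff (one_sub_conj_mul_ne_zero hw hx)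
    (one_sub_conj_mul_ne_zero hw hy)] at h
  have h' : (x - y) * (1 - conj w * w) = 0 := by linear_combination h
  exact sub_eq_zero.mp ((mul_eq_zero.mp h').resolve_right (one_sub_conj_mul_ne_zero hw hw))

lemma hasDerivAt_discMoebius {w z : ℂ} (hw : ‖w‖ < 1) (hz : ‖z‖ < 1) :
    HasDerivAt (discMoebius w) ((1 - conj w * w) / (1 - conj w * z) ^ 2) z := by
  have hd : HasDerivAt (fun z : ℂ => 1 - conj w * z) (-(conj w * 1)) z :=
    ((hasDerivAt_id z).const_mul (conj w)).const_sub 1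
  refine (((hasDerivAt_id z).sub_const w).fun_div hd
    (one_sub_conj_mul_ne_zero hw hz)).congr_deriv ?_
  simp only [id]
  ring

/-- Injective holomorphic maps from `U` to the unit disc with nonvanishing derivative. -/
structure IsDiscEmbedding (U : Set ℂ) (f : ℂ → ℂ) : Prop where
  differentiableOn : DifferentiableOn ℂ f U
  norm_lt_one : ∀ z ∈ U, ‖f z‖ < 1
  injOn : InjOn f U
  deriv_ne_zero : ∀ z ∈ U, deriv f z ≠ 0

namespace IsDiscEmbedding

variable {U : Set ℂ} {f : ℂ → ℂ}

lemma hasDerivAt (hf : IsDiscEmbedding U f) (hU : IsOpen U) {z : ℂ} (hz : z ∈ U) :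
    HasDerivAt f (deriv f z) z :=
  (hf.differentiableOn.differentiableAt (hU.mem_nhds hz)).hasDerivAt

lemma hasDerivAt_discMoebius_comp (hf : IsDiscEmbedding U f) (hU : IsOpen U) {w : ℂ}
    (hw : ‖w‖ < 1) {z : ℂ} (hz : z ∈ U) :
    HasDerivAt (discMoebius w ∘ f)
      ((1 - conj w * w) / (1 - conj w * f z) ^ 2 * deriv f z) z :=
  (hasDerivAt_discMoebius hw (hf.norm_lt_one z hz)).comp z (hf.hasDerivAt hU hz)

lemma discMoebius_comp (hf : IsDiscEmbedding U f) (hU : IsOpen U) {w : ℂ} (hw : ‖w‖ < 1) :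
    IsDiscEmbedding U (discMoebius w ∘ f) where
  differentiableOn z hz :=
    (hf.hasDerivAt_discMoebius_comp hU hw hz).differentiableAt.differentiableWithinAt
  norm_lt_one z hz := norm_discMoebius_lt_one hw (hf.norm_lt_one z hz)
  injOn := (discMoebius_injOn hw).comp hf.injOn
    fun z hz => mem_ball_zero_iff.mpr (hf.norm_lt_one z hz)
  deriv_ne_zero z hz := by
    rw [(hf.hasDerivAt_discMoebius_comp hU hw hz).deriv]
    exact mul_ne_zero (div_ne_zero (one_sub_conj_mul_ne_zero hw hw)
      (pow_ne_zero _ (one_sub_conj_mul_ne_zero hw (hf.norm_lt_one z hz))))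
      (hf.deriv_ne_zero z hz)

end IsDiscEmbedding

/-- A continuous square root of a nonvanishing differentiable function is differentiable. -/
lemma hasDerivAt_of_sq_eq {h k : ℂ → ℂ} {k' z : ℂ} (hc : ContinuousAt h z)
    (hk : HasDerivAt k k' z) (hsq : ∀ x, h x ^ 2 = k x) (hz : h z ≠ 0) :
    HasDerivAt h (k' / (2 * h z)) z := by
  rw [hasDerivAt_iff_tendsto_slope] at hk ⊢
  have hsum : Tendsto (fun x => h x + h z) (𝓝[≠] z) (𝓝 (2 * h z)) := by
    have := (hc.tendsto.mono_left (nhdsWithin_le_nhds (s := {z}ᶜ))).add_const (h z)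
    rwa [← two_mul] at this
  have h2 : (2 * h z) ≠ 0 := mul_ne_zero two_ne_zero hz
  refine (hk.div hsum h2).congr' ?_
  filter_upwards [hsum.eventually_ne h2] with x hx
  rw [Pi.div_apply, div_eq_iff hx, slope_def_field, slope_def_field, ← hsq, ← hsq]
  ring

namespace IsDiscEmbedding

variable {U : Set ℂ} {f : ℂ → ℂ}

lemma sqrt (hf : IsDiscEmbedding U f) (hU : IsOpen U) {h : ℂ → ℂ} (hc : ContinuousOn h U)
    (hsq : ∀ x, h x ^ 2 = f x) (h0 : ∀ z ∈ U, h z ≠ 0) : IsDiscEmbedding U h := by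
  have hd : ∀ z ∈ U, HasDerivAt h (deriv f z / (2 * h z)) z := fun z hz =>
    hasDerivAt_of_sq_eq (hc.continuousAt (hU.mem_nhds hz)) (hf.hasDerivAt hU hz) hsq (h0 z hz)
  refine ⟨fun z hz => (hd z hz).differentiableAt.differentiableWithinAt, fun z hz => ?_,
    fun x hx y hy hxy => hf.injOn hx hy (by rw [← hsq, ← hsq, hxy]), fun z hz => ?_⟩
  · have := hf.norm_lt_one z hz
    rw [← hsq, norm_pow] at this
    nlinarith [norm_nonneg (h z)]
  · rw [(hd z hz).deriv]
    exact div_ne_zero (hf.deriv_ne_zero z hz) (mul_ne_zero two_ne_zero (h0 z hz))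

/-- An embedding that omits a point of the disc can be improved at a zero (Koebe's trick). -/
lemma exists_norm_deriv_lt (hf : IsDiscEmbedding U f) (hU : IsOpen U)
    (hUc : IsSimplyConnected U) {q : ℂ} (hq : q ∈ U) (hfq : f q = 0) {w : ℂ} (hw : ‖w‖ < 1)
    (hwf : w ∉ f '' U) :
    ∃ g, IsDiscEmbedding U g ∧ g q = 0 ∧ ‖deriv f q‖ < ‖deriv g q‖ := by
  have hk := hf.discMoebius_comp hU hw
  have hk0 : ∀ z ∈ U, (discMoebius w ∘ f) z ≠ 0 := fun z hz h =>
    hwf ⟨z, hz, discMoebius_injOn hw (by simpa using hf.norm_lt_one z hz) (by simpa using hw)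
      (by simpa using h)⟩
  obtain ⟨h, hc, hsq⟩ := Complex.exists_continuousOn_pow_eq hUc hU
    hk.differentiableOn.continuousOn (by rintro ⟨z, hz, h⟩; exact hk0 z hz h) two_ne_zero
  have h0 : ∀ z ∈ U, h z ≠ 0 := fun z hz h => hk0 z hz (by rw [← hsq, h]; norm_num)
  have hh := hk.sqrt hU hc hsq h0
  have hhq := hh.norm_lt_one q hq
  refine ⟨_, hh.discMoebius_comp hU hhq, by simp, ?_⟩
  have hdk := hf.hasDerivAt_discMoebius_comp hU hw hq
  rw [(hh.hasDerivAt_discMoebius_comp hU hhq hq).deriv,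
    (hasDerivAt_of_sq_eq (hc.continuousAt (hU.mem_nhds hq)) hdk hsq (h0 q hq)).deriv, hfq]
  have hs : ‖w‖ = ‖h q‖ ^ 2 := by rw [← norm_pow, hsq]; simp [hfq]
  have hone : ∀ v : ℂ, ‖v‖ < 1 → ‖1 - conj v * v‖ = 1 - ‖v‖ ^ 2 := by
    intro v hv
    rw [← Complex.normSq_eq_conj_mul_self, Complex.normSq_eq_norm_sq, ← Complex.ofReal_one,
      ← Complex.ofReal_sub, Complex.norm_real, Real.norm_of_nonneg]
    nlinarith [norm_nonneg v]
  have hpos : 0 < ‖h q‖ := norm_pos_iff.mpr (h0 q hq)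
  have hdpos : 0 < ‖deriv f q‖ := norm_pos_iff.mpr (hf.deriv_ne_zero q hq)
  simp only [norm_mul, norm_div, norm_pow, hone _ hw, hone _ hhq, mul_zero, sub_zero,
    one_pow, div_one, Complex.norm_ofNat]
  rw [hs]
  have h1 : 0 < 1 - ‖h q‖ ^ 2 := by nlinarith
  have : (1 - ‖h q‖ ^ 2) / (1 - ‖h q‖ ^ 2) ^ 2 *
      ((1 - (‖h q‖ ^ 2) ^ 2) * ‖deriv f q‖ / (2 * ‖h q‖)) =
      (1 + ‖h q‖ ^ 2) / (2 * ‖h q‖) * ‖deriv f q‖ := by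
    field_simp
    ring
  rw [this]
  refine lt_mul_of_one_lt_left hdpos ?_
  rw [one_lt_div (by positivity)]
  nlinarith [sq_pos_of_pos (sub_pos.mpr hhq)]

lemma image_mem_nhds (hf : IsDiscEmbedding U f) (hU : IsOpen U) {V : Set ℂ} {z : ℂ}
    (hz : z ∈ U) (hV : V ∈ 𝓝 z) : f '' V ∈ 𝓝 (f z) := by
  have hs : HasStrictDerivAt f (deriv f z) z :=
    (hf.differentiableOn.analyticAt (hU.mem_nhds hz)).hasStrictDerivAt
  rw [← hs.map_nhds_eq (hf.deriv_ne_zero z hz)]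
  exact image_mem_map hV

/-- A disc embedding onto the disc has a holomorphic inverse. -/
lemma exists_inverse (hf : IsDiscEmbedding U f) (hU : IsOpen U)
    (hsurj : ∀ w : ℂ, ‖w‖ < 1 → w ∈ f '' U) :
    ∃ g : ℂ → ℂ, DifferentiableOn ℂ g (ball 0 1) ∧ MapsTo g (ball 0 1) U ∧
      ∀ z ∈ U, g (f z) = z := by
  have hinv := hf.injOn.leftInvOn_invFunOn
  refine ⟨Function.invFunOn f U, fun w hw => ?_, fun w hw => ?_, fun z hz => hinv hz⟩
  · obtain ⟨z, hz, rfl⟩ := hsurj w (by simpa using hw)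
    have hcont : ContinuousAt (Function.invFunOn f U) (f z) := by
      intro V hV
      rw [hinv hz] at hV
      rw [mem_map]
      filter_upwards [hf.image_mem_nhds hU hz (inter_mem hV (hU.mem_nhds hz))]
      rintro _ ⟨x, ⟨hxV, hxU⟩, rfl⟩
      rwa [mem_preimage, hinv hxU]
    refine (HasDerivAt.of_local_left_inverse hcont (f' := deriv f z) (f := f) ?_
      (hf.deriv_ne_zero z hz) ?_).differentiableAt.differentiableWithinAt
    · rw [hinv hz]
      exact hf.hasDerivAt hU hz
    · filter_upwards [hf.image_mem_nhds hU hz (hU.mem_nhds hz)] with y hy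
      exact Function.invFunOn_eq hy
  · exact Function.invFunOn_mem (hsurj w (by simpa using hw))

end IsDiscEmbedding

/-- **Hurwitz's theorem**: a locally uniform limit of nonvanishing holomorphic functions either
does not vanish at a point or vanishes near it. -/
lemma TendstoLocallyUniformlyOn.eventually_eq_zero_of_forall_ne_zero {ι : Type*} {φ : Filter ι}
    [φ.NeBot] {U : Set ℂ} {F : ι → ℂ → ℂ} {f : ℂ → ℂ} (hF : TendstoLocallyUniformlyOn F f φ U)
    (hU : IsOpen U) (hd : ∀ n, DifferentiableOn ℂ (F n) U) (h0 : ∀ n, ∀ z ∈ U, F n z ≠ 0)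
    {z : ℂ} (hz : z ∈ U) (hfz : f z = 0) : ∀ᶠ x in 𝓝 z, f x = 0 := by
  have hfd : DifferentiableOn ℂ f U := hF.differentiableOn (.of_forall hd) hU
  refine (hfd.analyticAt (hU.mem_nhds hz)).eventually_eq_zero_or_eventually_ne_zero.resolve_right
    fun hne => ?_
  rw [eventually_nhdsWithin_iff] at hne
  obtain ⟨r, hr, hball⟩ := nhds_basis_closedBall.mem_iff.mp (hne.and (hU.mem_nhds hz))
  have hsub : closedBall z r ⊆ U := fun x hx => (hball hx).2
  obtain ⟨x, hx, hmin⟩ := (isCompact_sphere z r).exists_isMinOn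
    (NormedSpace.sphere_nonempty.mpr hr.le)
    (hfd.continuousOn.mono (sphere_subset_closedBall.trans hsub)).norm
  have hm : 0 < ‖f x‖ :=
    norm_pos_iff.mpr ((hball (sphere_subset_closedBall hx)).1 (ne_of_mem_sphere hx hr.ne'))
  have hunif : TendstoUniformlyOn F f φ (closedBall z r) :=
    (tendstoLocallyUniformlyOn_iff_forall_isCompact hU).mp hF _ hsub (isCompact_closedBall z r)
  obtain ⟨n, hn⟩ := (tendstoUniformlyOn_iff.mp hunif (‖f x‖ / 2) (half_pos hm)).exists
  have hdc : DiffContOnCl ℂ (F n)⁻¹ (ball z r) := by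
    refine DifferentiableOn.diffContOnCl ?_
    rw [closure_ball z hr.ne']
    exact ((hd n).mono hsub).inv fun y hy => h0 n y (hsub hy)
  have hbound : ‖(F n)⁻¹ z‖ ≤ (‖f x‖ / 2)⁻¹ := by
    refine Complex.norm_le_of_forall_mem_frontier_norm_le isBounded_ball hdc (fun y hy => ?_)
      (subset_closure (mem_ball_self hr))
    rw [frontier_ball z hr.ne'] at hy
    rw [Pi.inv_apply, norm_inv]
    refine inv_anti₀ (half_pos hm) ?_
    have h1 : ‖f x‖ ≤ ‖f y‖ := hmin hy
    have h2 := hn y (sphere_subset_closedBall hy)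
    rw [dist_eq_norm] at h2
    have h3 := norm_sub_norm_le (f y) (F n y)
    linarith
  have hFz := h0 n z hz
  rw [Pi.inv_apply, norm_inv, inv_le_inv₀ (norm_pos_iff.mpr hFz) (half_pos hm)] at hbound
  have h2 := hn z (mem_closedBall_self hr.le)
  rw [hfz, dist_zero_left] at h2
  linarith

/-- **Montel's theorem** along an ultrafilter: a family of holomorphic maps into the unit disc
converges locally uniformly. -/
lemma exists_tendstoLocallyUniformlyOn_of_norm_lt_one {ι : Type*} (φ : Ultrafilter ι) {U : Set ℂ}
    (hU : IsOpen U) {F : ι → ℂ → ℂ} (hd : ∀ n, DifferentiableOn ℂ (F n) U)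
    (hF : ∀ n, ∀ z ∈ U, ‖F n z‖ < 1) :
    ∃ f : ℂ → ℂ, TendstoLocallyUniformlyOn F f φ U ∧ ∀ z ∈ U, ‖f z‖ ≤ 1 := by
  have hlim : ∀ z, ∃ y, z ∈ U → ‖y‖ ≤ 1 ∧ Tendsto (F · z) φ (𝓝 y) := by
    intro z
    by_cases hz : z ∈ U
    · obtain ⟨y, hy, hle⟩ := isCompact_iff_ultrafilter_le_nhds.mp
        (isCompact_closedBall (0 : ℂ) 1) (φ.map (F · z))
        (by
          rw [Ultrafilter.coe_map, le_principal_iff, mem_map]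
          exact univ_mem' fun n => mem_closedBall_zero_iff.mpr (hF n z hz).le)
      exact ⟨y, fun _ => ⟨mem_closedBall_zero_iff.mp hy, hle⟩⟩
    · exact ⟨0, fun h => absurd h hz⟩
  choose f hf using hlim
  refine ⟨f, tendstoLocallyUniformlyOn_iff.mpr fun ε hε x hx => ?_, fun z hz => (hf z hz).1⟩
  obtain ⟨r, hr, hball⟩ := isOpen_iff.mp hU x hx
  have hlip : ∀ n, ∀ y ∈ ball x r, dist (F n y) (F n x) ≤ 2 / r * dist y x := fun n y hy =>
    Complex.dist_le_div_mul_dist_of_mapsTo_ball ((hd n).mono hball) (fun v hv => by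
      rw [mem_closedBall, dist_eq_norm]
      have := norm_sub_le (F n v) (F n x)
      linarith [hF n v (hball hv), hF n x hx]) hy
  have hlipf : ∀ y ∈ ball x r, dist (f y) (f x) ≤ 2 / r * dist y x := fun y hy =>
    le_of_tendsto ((hf y (hball hy)).2.dist (hf x hx).2) (.of_forall fun n => hlip n y hy)
  refine ⟨ball x (min r (r * ε / 6)),
    mem_nhdsWithin_of_mem_nhds (ball_mem_nhds x (by positivity)), ?_⟩
  filter_upwards [(hf x hx).2.eventually (ball_mem_nhds _ (by positivity : 0 < ε / 3))]
    with n hn y hy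
  have hyr : y ∈ ball x r := ball_subset_ball (min_le_left _ _) hy
  have hsmall : 2 / r * dist y x < ε / 3 := by
    have : dist y x < r * ε / 6 := (mem_ball.mp hy).trans_le (min_le_right _ _)
    rw [div_mul_eq_mul_div, div_lt_iff₀ hr]
    linarith
  have h1 := hlip n y hyr
  have h2 := hlipf y hyr
  have h3 := dist_triangle4 (f y) (f x) (F n x) (F n y)
  rw [dist_comm] at hn
  rw [dist_comm (F n x)] at h3
  linarith

/-- A locally uniform limit of disc embeddings whose derivative is nonzero at some point is
a disc embedding. -/
lemma IsDiscEmbedding.of_tendstoLocallyUniformlyOn {ι : Type*} {φ : Filter ι} [φ.NeBot]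
    {U : Set ℂ} (hU : IsOpen U) (hUc : IsPreconnected U) {F : ι → ℂ → ℂ} {f : ℂ → ℂ}
    (hF : ∀ n, IsDiscEmbedding U (F n)) (hlim : TendstoLocallyUniformlyOn F f φ U)
    (hf1 : ∀ z ∈ U, ‖f z‖ ≤ 1) {q : ℂ} (hq : q ∈ U) (hfq : deriv f q ≠ 0) :
    IsDiscEmbedding U f := by
  have hd : DifferentiableOn ℂ f U :=
    hlim.differentiableOn (.of_forall fun n => (hF n).differentiableOn) hU
  have hnot : ∀ z ∈ U, ¬ ∀ᶠ x in 𝓝 z, deriv f x = 0 := fun z hz h =>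
    hfq ((hd.deriv hU).analyticOnNhd hU |>.eqOn_zero_of_preconnected_of_eventuallyEq_zero
      hUc hz h hq)
  have hd0 : ∀ z ∈ U, deriv f z ≠ 0 := fun z hz h =>
    hnot z hz <|
      (hlim.deriv (.of_forall fun n => (hF n).differentiableOn)
        hU).eventually_eq_zero_of_forall_ne_zero hU
        (fun n => (hF n).differentiableOn.deriv hU) (fun n => (hF n).deriv_ne_zero) hz h
  refine ⟨hd, fun z hz => ?_, fun x hx y hy hxy => ?_, hd0⟩
  · have hs : HasStrictDerivAt f (deriv f z) z :=
      (hd.analyticAt (hU.mem_nhds hz)).hasStrictDerivAt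
    have himg : f '' U ∈ 𝓝 (f z) := by
      rw [← hs.map_nhds_eq (hd0 z hz)]
      exact image_mem_map (hU.mem_nhds hz)
    have hsub : f '' U ⊆ closedBall 0 1 := by
      rintro _ ⟨x, hx, rfl⟩
      exact mem_closedBall_zero_iff.mpr (hf1 x hx)
    have hint : f z ∈ interior (closedBall (0 : ℂ) 1) :=
      mem_interior_iff_mem_nhds.mpr (mem_of_superset himg hsub)
    rw [interior_closedBall _ one_ne_zero] at hint
    simpa using hint
  · by_contra hne
    have hV : IsOpen (U \ {x}) := hU.sdiff isClosed_singleton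
    have hlim' : TendstoLocallyUniformlyOn (fun n z => F n z - F n x) (fun z => f z - f x) φ
        (U \ {x}) := by
      refine (hlim.mono sdiff_subset).sub (TendstoUniformlyOn.tendstoLocallyUniformlyOn ?_)
      exact (hlim.tendsto_at hx).tendstoUniformlyOn_const _
    have hev := hlim'.eventually_eq_zero_of_forall_ne_zero hV
      (fun n => ((hF n).differentiableOn.mono sdiff_subset).sub_const _)
      (fun n z hz h => hz.2 ((hF n).injOn hz.1 hx (sub_eq_zero.mp h))) ⟨hy, Ne.symm hne⟩
      (by simp [hxy])
    refine hnot y hy ?_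
    filter_upwards [hev.eventually_nhds] with v hv
    have : f =ᶠ[𝓝 v] fun _ => f x := hv.mono fun u hu => sub_eq_zero.mp hu
    rw [this.deriv_eq, deriv_const]

/-- The Riemann mapping theorem for domains that embed in the disc. -/
lemma exists_isDiscEmbedding_surjective {U : Set ℂ} (hU : IsOpen U) (hUc : IsSimplyConnected U)
    {q : ℂ} (hq : q ∈ U) {f₀ : ℂ → ℂ} (hf₀ : IsDiscEmbedding U f₀) (hf₀q : f₀ q = 0) :
    ∃ f, IsDiscEmbedding U f ∧ f q = 0 ∧ ∀ w : ℂ, ‖w‖ < 1 → w ∈ f '' U := by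
  set S : Set ℝ := {d | ∃ f, IsDiscEmbedding U f ∧ f q = 0 ∧ ‖deriv f q‖ = d} with hS
  have hSne : S.Nonempty := ⟨_, f₀, hf₀, hf₀q, rfl⟩
  have hSbdd : BddAbove S := by
    obtain ⟨r, hr, hball⟩ := isOpen_iff.mp hU q hq
    refine ⟨1 / r, ?_⟩
    rintro _ ⟨f, hf, hfq, rfl⟩
    refine Complex.norm_deriv_le_div_of_mapsTo_ball (hf.differentiableOn.mono hball)
      (fun z hz => ?_) hr
    simpa [hfq] using (hf.norm_lt_one z (hball hz)).le
  obtain ⟨u, -, hu, huS⟩ := exists_seq_tendsto_sSup hSne hSbdd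
  choose F hF hFq hFu using huS
  obtain ⟨f, hlim, hf1⟩ := exists_tendstoLocallyUniformlyOn_of_norm_lt_one (hyperfilter ℕ) hU
    (fun n => (hF n).differentiableOn) (fun n => (hF n).norm_lt_one)
  have hderiv : Tendsto (fun n => ‖deriv (F n) q‖) (hyperfilter ℕ) (𝓝 ‖deriv f q‖) :=
    ((hlim.deriv (.of_forall fun n => (hF n).differentiableOn) hU).tendsto_at hq).norm
  simp only [hFu] at hderiv
  have hsup : ‖deriv f q‖ = sSup S :=
    tendsto_nhds_unique hderiv (hu.mono_left Nat.hyperfilter_le_atTop)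
  have hpos : 0 < sSup S :=
    (norm_pos_iff.mpr (hf₀.deriv_ne_zero q hq)).trans_le (le_csSup hSbdd ⟨f₀, hf₀, hf₀q, rfl⟩)
  have hf : IsDiscEmbedding U f := .of_tendstoLocallyUniformlyOn hU
    hUc.isPathConnected.isConnected.isPreconnected hF hlim hf1 hq
    (norm_pos_iff.mp (hsup ▸ hpos))
  have hfq : f q = 0 := tendsto_nhds_unique (hlim.tendsto_at hq) (by simp [hFq])
  refine ⟨f, hf, hfq, fun w hw => by_contra fun hwf => ?_⟩
  obtain ⟨g, hg, hgq, hlt⟩ := hf.exists_norm_deriv_lt hU hUc hq hfq hw hwf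
  exact absurd (le_csSup hSbdd ⟨g, hg, hgq, rfl⟩) (by rw [← hsup]; exact not_le.mpr hlt)

/-- The Cayley transform embeds subsets of the upper half-plane in the disc. -/
lemma isDiscEmbedding_cayley {U : Set ℂ} (hupper : ∀ z ∈ U, 0 < z.im) {q : ℂ} (hq : 0 < q.im) :
    IsDiscEmbedding U (fun z => (z - q) / (z - conj q)) := by
  have hne : ∀ z ∈ U, z - conj q ≠ 0 := fun z hz h => by
    have := congrArg Complex.im h
    simp only [Complex.sub_im, Complex.conj_im, Complex.zero_im] at this
    linarith [hupper z hz]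
  have hqq : q - conj q ≠ 0 := fun h => by
    have := congrArg Complex.im h
    simp only [Complex.sub_im, Complex.conj_im, Complex.zero_im] at this
    linarith
  have hd : ∀ z ∈ U, HasDerivAt (fun z => (z - q) / (z - conj q))
      ((q - conj q) / (z - conj q) ^ 2) z := fun z hz => by
    refine (((hasDerivAt_id z).sub_const q).fun_div ((hasDerivAt_id z).sub_const (conj q))
      (hne z hz)).congr_deriv ?_
    simp only [id]
    ring
  refine ⟨fun z hz => (hd z hz).differentiableAt.differentiableWithinAt, fun z hz => ?_,
    fun x hx y hy h => ?_, fun z hz => ?_⟩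
  · rw [norm_div, div_lt_one (norm_pos_iff.mpr (hne z hz))]
    refine lt_of_pow_lt_pow_left₀ 2 (norm_nonneg _) ?_
    rw [Complex.sq_norm, Complex.sq_norm, Complex.normSq_apply, Complex.normSq_apply]
    simp only [Complex.sub_re, Complex.sub_im, Complex.conj_re, Complex.conj_im]
    nlinarith [mul_pos (hupper z hz) hq]
  · rw [div_eq_div_iff (hne x hx) (hne y hy)] at h
    have h' : (x - y) * (q - conj q) = 0 := by linear_combination h
    exact sub_eq_zero.mp ((mul_eq_zero.mp h').resolve_right hqq)
  · rw [(hd z hz).deriv]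
    exact div_ne_zero hqq (pow_ne_zero _ (hne z hz))

/-- Radial contraction in Riemann coordinates: a simply connected domain in the upper half-plane
contracts holomorphically to any of its points. -/
lemma exists_holomorphic_contraction {U : Set ℂ} (hU : IsOpen U) (hUc : IsSimplyConnected U)
    (hupper : ∀ z ∈ U, 0 < z.im) {q : ℂ} (hq : q ∈ U) :
    ∃ K : ℂ → ℝ → ℂ,
      ContinuousOn (fun p : ℂ × ℝ => K p.1 p.2) (U ×ˢ Icc (0 : ℝ) 1) ∧
      (∀ z ∈ U, ∀ t ∈ Icc (0 : ℝ) 1, K z t ∈ U) ∧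
      (∀ z ∈ U, K z 1 = z) ∧ (∀ z ∈ U, K z 0 = q) ∧
      ∀ t ∈ Icc (0 : ℝ) 1, DifferentiableOn ℂ (fun z => K z t) U := by
  obtain ⟨f, hf, hfq, hsurj⟩ := exists_isDiscEmbedding_surjective hU hUc hq
    (isDiscEmbedding_cayley hupper (hupper q hq)) (by simp)
  obtain ⟨g, hg, hgU, hgf⟩ := hf.exists_inverse hU hsurj
  have hmem : ∀ z ∈ U, ∀ t ∈ Icc (0 : ℝ) 1, (t : ℂ) * f z ∈ ball (0 : ℂ) 1 := by
    intro z hz t ht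
    rw [mem_ball_zero_iff, norm_mul, Complex.norm_real, Real.norm_of_nonneg ht.1]
    nlinarith [ht.2, hf.norm_lt_one z hz, norm_nonneg (f z)]
  refine ⟨fun z t => g (t * f z), ?_, fun z hz t ht => hgU (hmem z hz t ht),
    fun z hz => by simp [hgf z hz], fun z _ => by simpa [hfq] using hgf q hq, fun t ht =>
    hg.comp (hf.differentiableOn.const_mul _) fun z hz => hmem z hz t ht⟩
  refine hg.continuousOn.comp (ContinuousOn.mul ?_ ?_) fun p hp => hmem p.1 hp.1 p.2 hp.2
  · exact (Complex.continuous_ofReal.comp continuous_snd).continuousOn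
  · exact hf.differentiableOn.continuousOn.comp continuousOn_fst fun p hp => hp.1

/-- Let `U` be a nonempty open, connected, simply connected subset of the open upper
half-plane whose closure is a closed topological disc, and let `D = U ∪ conj(U)`.
For a fixed `q = a + ib ∈ U` there is a holomorphic, conjugation-equivariant strong
deformation retraction of `D` onto the pair of points `{a + ib, a - ib}`. -/
theorem symmetric_holomorphic_retraction_product (U : Set ℂ)
    (hne : U.Nonempty) (hopen : IsOpen U) (hconn : IsConnected U)
    (hsc : SimplyConnectedSpace U)
    (hupper : ∀ z ∈ U, 0 < z.im)
    (hdisc : Nonempty (closure U ≃ₜ closedBall (0 : ℂ) 1))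
    (D : Set ℂ) (hD : D = U ∪ (starRingEnd ℂ) '' U)
    (a b : ℝ) (hq : (a : ℂ) + b * Complex.I ∈ U) :
    ∃ H : ℂ → ℝ → ℂ,
      ContinuousOn (fun p : ℂ × ℝ => H p.1 p.2) (D ×ˢ Icc (0 : ℝ) 1) ∧
      (∀ z ∈ D, ∀ t ∈ Icc (0 : ℝ) 1, H z t ∈ D) ∧
      (∀ z ∈ D, H z 1 = z) ∧
      (∀ z ∈ U, H z 0 = (a : ℂ) + b * Complex.I) ∧
      (∀ z ∈ (starRingEnd ℂ) '' U, H z 0 = (a : ℂ) - b * Complex.I) ∧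
      (∀ t ∈ Icc (0 : ℝ) 1, DifferentiableOn ℂ (fun z => H z t) D) ∧
      (∀ t ∈ Icc (0 : ℝ) 1, ∀ z ∈ D, H ((starRingEnd ℂ) z) t = (starRingEnd ℂ) (H z t)) := by
  subst hD
  set q : ℂ := a + b * Complex.I with hqdef
  have hcq : conj q = a - b * Complex.I := by simp [hqdef, sub_eq_add_neg]
  obtain ⟨K, hKc, hKU, hK1, hK0, hKd⟩ := exists_holomorphic_contraction hopen hsc hupper hq
  have hconjU : ∀ z, z ∈ (starRingEnd ℂ) '' U ↔ conj z ∈ U := fun z =>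
    ⟨by rintro ⟨w, hw, rfl⟩; simpa using hw, fun h => ⟨_, h, by simp⟩⟩
  have hlow : ∀ z, conj z ∈ U → z.im < 0 := fun z hz => by simpa using hupper _ hz
  let H : ℂ → ℝ → ℂ := fun z t => if 0 < z.im then K z t else conj (K (conj z) t)
  have hHU : ∀ z ∈ U, ∀ t, H z t = K z t := fun z hz t => if_pos (hupper z hz)
  have hHc : ∀ z, conj z ∈ U → ∀ t, H z t = conj (K (conj z) t) := fun z hz t =>
    if_neg (hlow z hz).not_gt
  have hopen' : IsOpen ((starRingEnd ℂ) '' U) := by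
    have : (starRingEnd ℂ) '' U = (starRingEnd ℂ) ⁻¹' U := ext hconjU
    rw [this]
    exact hopen.preimage Complex.continuous_conj
  refine ⟨H, ?_, ?_, ?_, ?_, ?_, ?_, ?_⟩
  · refine continuousOn_of_locally_continuousOn ?_
    rintro ⟨z, t⟩ ⟨hz | hz, -⟩
    · refine ⟨U ×ˢ univ, hopen.prod isOpen_univ, ⟨hz, trivial⟩, ?_⟩
      have hsub : (U ∪ (starRingEnd ℂ) '' U) ×ˢ Icc (0 : ℝ) 1 ∩ U ×ˢ univ ⊆ U ×ˢ Icc 0 1 :=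
        fun p hp => ⟨hp.2.1, hp.1.2⟩
      exact (hKc.mono hsub).congr fun p hp => hHU p.1 hp.2.1 p.2
    · refine ⟨((starRingEnd ℂ) '' U) ×ˢ univ, hopen'.prod isOpen_univ, ⟨hz, trivial⟩, ?_⟩
      have hcont : ContinuousOn (fun p : ℂ × ℝ => conj (K (conj p.1) p.2))
          (((starRingEnd ℂ) '' U) ×ˢ Icc (0 : ℝ) 1) :=
        Complex.continuous_conj.comp_continuousOn <| hKc.comp
          (f := fun p : ℂ × ℝ => (conj p.1, p.2))
          ((Complex.continuous_conj.comp continuous_fst).prodMk continuous_snd).continuousOn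
          fun p hp => ⟨(hconjU _).mp hp.1, hp.2⟩
      refine (hcont.mono fun p hp => ?_).congr fun p hp => hHc p.1 ((hconjU _).mp hp.2.1) p.2
      exact ⟨hp.2.1, hp.1.2⟩
  · rintro z (hz | hz) t ht
    · rw [hHU z hz]
      exact .inl (hKU z hz t ht)
    · rw [hconjU] at hz
      rw [hHc z hz]
      exact .inr ⟨_, hKU _ hz t ht, rfl⟩
  · rintro z (hz | hz)
    · rw [hHU z hz, hK1 z hz]
    · rw [hconjU] at hz
      rw [hHc z hz, hK1 _ hz, Complex.conj_conj]
  · intro z hz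
    rw [hHU z hz, hK0 z hz]
  · intro z hz
    rw [hconjU] at hz
    rw [hHc z hz, hK0 _ hz, hcq]
  · intro t ht
    refine DifferentiableOn.union_of_isOpen ?_ ?_ hopen hopen'
    · exact (hKd t ht).congr fun z hz => hHU z hz t
    · intro z hz
      have hd : DifferentiableAt ℂ (conj ∘ (fun z => K z t) ∘ conj) z := by
        rw [hconjU] at hz
        simpa using ((hKd t ht).differentiableAt (hopen.mem_nhds hz)).conj_conj
      refine hd.differentiableWithinAt.congr_of_eventuallyEq_of_mem ?_ hz
      filter_upwards [self_mem_nhdsWithin] with v hv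
      exact hHc v ((hconjU v).mp hv) t
  · rintro t ht z (hz | hz)
    · rw [hHU z hz, hHc (conj z) (by simpa using hz), Complex.conj_conj]
    · rw [hconjU] at hz
      rw [hHU _ hz, hHc z hz, Complex.conj_conj]
end

section
/- Let D ⊆ ℂ be a symmetric open set which is basic with closed-disc closure, i.e. either (slice case) D is nonempty, connected, simply connected, D ∩ ℝ ≠ ∅ and the closure of D is homeomorphic to the closed unit disc, or (product case) D = U ∪ conj(U) where U ⊆ ℂ⁺ is nonempty, open, connected, simply connected and the closure of U is homeomorphic to the closed unit disc. Let ℍ be the real quaternions with standard basis (e₀,e₁,e₂,e₃) = (1,i,j,k) and 𝕊 = { J ∈ ℍ : J² = −1 }. Consider the set S of quadruples (f₀,f₁,f₂,f₃) of holomorphic Schwarz symmetric functions f_m : D → ℂ such that for every z ∈ D and every J ∈ 𝕊 the quaternion ∑_{m=0}^{3} (Re f_m(z) + (Im f_m(z))·J)·e_m is nonzero. Then S, equipped with the topology of componentwise uniform convergence on compact subsets of D, is path-connected. -/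
open Set Metric

/-- The value at the imaginary unit `J` of the complex number `w`, viewed slicewise:
`w = x + iy ↦ x + y·J ∈ ℍ`. -/
noncomputable def sliceValue (J : Quaternion ℝ) (w : ℂ) : Quaternion ℝ :=
  ((w.re : ℝ) : Quaternion ℝ) + w.im • J

/-- The standard basis `(1, i, j, k)` of the quaternions. -/
noncomputable def quatBasis : Fin 4 → Quaternion ℝ :=
  ![1, ⟨0, 1, 0, 0⟩, ⟨0, 0, 1, 0⟩, ⟨0, 0, 0, 1⟩]

section

open Filter Topology

/-- A pointwise limit of holomorphic functions with values in the unit disc is a locally uniform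
limit. -/
theorem tendstoLocallyUniformlyOn_of_norm_le_one {ι : Type*} {p : Filter ι} {U : Set ℂ}
    (hU : IsOpen U) {F : ι → ℂ → ℂ} {f : ℂ → ℂ} (hF : ∀ i, DifferentiableOn ℂ (F i) U)
    (hb : ∀ i, ∀ z ∈ U, ‖F i z‖ ≤ 1) (hlim : ∀ z ∈ U, Tendsto (F · z) p (𝓝 (f z))) :
    TendstoLocallyUniformlyOn F f p U := by
  have heq : ∀ z ∈ U, EquicontinuousAt F z := by
    intro z hz
    obtain ⟨r, hr, hrU⟩ := Metric.isOpen_iff.1 hU z hz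
    refine equicontinuousAt_of_continuity_modulus (fun w => 2 / r * dist w z) ?_ F ?_
    · have : Continuous fun w : ℂ => 2 / r * dist w z := by fun_prop
      simpa using this.tendsto z
    · filter_upwards [ball_mem_nhds z hr] with w hw i
      rw [dist_comm]
      refine Complex.dist_le_div_mul_dist_of_mapsTo_ball ((hF i).mono hrU) (fun v hv => ?_) hw
      rw [mem_closedBall, dist_eq_norm]
      linarith [norm_sub_le (F i v) (F i z), hb i v (hrU hv), hb i z hz]
  rw [tendstoLocallyUniformlyOn_iff_forall_isCompact hU]
  intro K hKU hK
  have key := (EquicontinuousOn.tendsto_uniformOnFun_iff_pi' (𝔖 := {K}) (F := F)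
    (by simpa using hK) (by
      rintro _ rfl
      exact fun x hx => (heq x (hKU hx)).equicontinuousWithinAt _) p f).2 (by
      rw [tendsto_pi_nhds]
      rintro ⟨x, hx⟩
      exact hlim x (hKU (by simpa using hx)))
  exact UniformOnFun.tendsto_iff_tendstoUniformlyOn.1 key K rfl

/-- **Hurwitz's theorem**: a value taken by a locally nonconstant locally uniform limit of
holomorphic functions is eventually taken nearby. -/
theorem eventually_mem_image_of_tendstoLocallyUniformlyOn {ι : Type*} {p : Filter ι} [p.NeBot]
    {U V : Set ℂ} (hU : IsOpen U) {F : ι → ℂ → ℂ} {f : ℂ → ℂ}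
    (hF : ∀ i, DifferentiableOn ℂ (F i) U) (hlim : TendstoLocallyUniformlyOn F f p U)
    {a : ℂ} (ha : a ∈ U) (hV : V ∈ 𝓝 a) (hf : ¬ ∀ᶠ z in 𝓝 a, f z = f a) :
    ∀ᶠ i in p, f a ∈ F i '' V := by
  have hfd : DifferentiableOn ℂ f U := hlim.differentiableOn (.of_forall hF) hU
  have hne : ∀ᶠ z in 𝓝[≠] a, f z ≠ f a :=
    ((hfd.analyticAt (hU.mem_nhds ha)).eventually_eq_or_eventually_ne
      analyticAt_const).resolve_left hf
  rw [eventually_nhdsWithin_iff] at hne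
  obtain ⟨r, hr, hrs⟩ := Metric.nhds_basis_closedBall.mem_iff.1
    (inter_mem (inter_mem (hU.mem_nhds ha) hV) hne)
  have hrU : closedBall a r ⊆ U := fun z hz => (hrs hz).1.1
  have hcont : ContinuousOn (fun z => ‖f z - f a‖) (sphere a r) :=
    ((hfd.continuousOn.mono (sphere_subset_closedBall.trans hrU)).sub continuousOn_const).norm
  obtain ⟨w, hw, hmin⟩ := (isCompact_sphere a r).exists_isMinOn
    (NormedSpace.sphere_nonempty.2 hr.le) hcont
  set ε := ‖f w - f a‖ with hε
  have hεpos : 0 < ε := by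
    rw [hε, norm_pos_iff, sub_ne_zero]
    refine (hrs (sphere_subset_closedBall hw)).2 ?_
    rintro rfl
    simp at hw
    exact hr.ne hw
  have hunif := (tendstoLocallyUniformlyOn_iff_forall_isCompact hU).1 hlim _ hrU
    (isCompact_closedBall a r)
  filter_upwards [Metric.tendstoUniformlyOn_iff.1 hunif (ε / 8) (by positivity)] with i hi
  have haB : a ∈ closedBall a r := mem_closedBall_self hr.le
  have hsph : ∀ z ∈ sphere a r, ε / 2 ≤ ‖F i z - F i a‖ := by
    intro z hz
    have h1 := hi z (sphere_subset_closedBall hz)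
    have h2 := hi a haB
    have h3 : ε ≤ ‖f z - f a‖ := hmin hz
    rw [dist_eq_norm] at h1 h2
    have h4 : f z - f a = (f z - F i z) + (F i z - F i a) - (f a - F i a) := by ring
    have h5 := norm_sub_le ((f z - F i z) + (F i z - F i a)) (f a - F i a)
    have h6 := norm_add_le (f z - F i z) (F i z - F i a)
    rw [← h4] at h5
    linarith
  have hsub : ball (F i a) (ε / 2 / 2) ⊆ F i '' closedBall a r := by
    refine DiffContOnCl.ball_subset_image_closedBall
      (((hF i).mono hrU).diffContOnCl_ball subset_rfl) hr hsph ?_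
    intro hcon
    have hev : ∀ᶠ z in 𝓝 a, F i z = F i a := by simpa using hcon
    have hana : AnalyticOnNhd ℂ (F i) (closedBall a r) := fun z hz =>
      (hF i).analyticAt (hU.mem_nhds (hrU hz))
    have := hana.eqOn_of_preconnected_of_eventuallyEq (analyticOnNhd_const (v := F i a))
      (convex_closedBall a r).isPreconnected haB hev (sphere_subset_closedBall hw)
    have h7 := hsph w hw
    rw [this] at h7
    simp at h7
    linarith
  have hmem : f a ∈ ball (F i a) (ε / 2 / 2) := by
    rw [mem_ball]
    linarith [hi a haB]
  exact image_mono (fun z hz => (hrs hz).1.2) (hsub hmem)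

/-- The Blaschke factor of the unit disc vanishing at `w`. -/
noncomputable def blaschke (w z : ℂ) : ℂ := (z - w) / (1 - (starRingEnd ℂ) w * z)

theorem blaschke_denom_ne_zero {w z : ℂ} (hw : ‖w‖ < 1) (hz : ‖z‖ < 1) :
    1 - (starRingEnd ℂ) w * z ≠ 0 := by
  intro h
  have h1 : ‖(starRingEnd ℂ) w * z‖ = 1 := by rw [← sub_eq_zero.1 h, norm_one]
  rw [norm_mul, RCLike.norm_conj] at h1
  nlinarith [norm_nonneg w, norm_nonneg z]

theorem norm_blaschke_lt_one {w z : ℂ} (hw : ‖w‖ < 1) (hz : ‖z‖ < 1) : ‖blaschke w z‖ < 1 := by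
  have hne := blaschke_denom_ne_zero hw hz
  rw [blaschke, norm_div, div_lt_one (norm_pos_iff.2 hne)]
  refine lt_of_pow_lt_pow_left₀ 2 (norm_nonneg _) ?_
  have hw2 : ‖w‖ ^ 2 < 1 := by nlinarith [norm_nonneg w]
  have hz2 : ‖z‖ ^ 2 < 1 := by nlinarith [norm_nonneg z]
  rw [← Complex.normSq_eq_norm_sq, Complex.normSq_apply] at hw2 hz2
  rw [← Complex.normSq_eq_norm_sq, ← Complex.normSq_eq_norm_sq, Complex.normSq_apply,
    Complex.normSq_apply]
  simp only [Complex.sub_re, Complex.sub_im, Complex.mul_re, Complex.mul_im, Complex.conj_re,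
    Complex.conj_im, Complex.one_re, Complex.one_im]
  nlinarith [mul_pos (sub_pos.2 hw2) (sub_pos.2 hz2)]

theorem blaschke_injOn {w : ℂ} (hw : ‖w‖ < 1) : InjOn (blaschke w) (ball 0 1) := by
  intro a ha b hb hab
  rw [mem_ball_zero_iff] at ha hb
  rw [blaschke, blaschke, div_eq_div_iff (blaschke_denom_ne_zero hw ha)
    (blaschke_denom_ne_zero hw hb)] at hab
  have h1 := blaschke_denom_ne_zero hw hw
  have h2 : (a - b) * (1 - (starRingEnd ℂ) w * w) = 0 := by linear_combination hab
  exact sub_eq_zero.1 ((mul_eq_zero.1 h2).resolve_right h1)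

theorem hasDerivAt_blaschke {w z : ℂ} (hw : ‖w‖ < 1) (hz : ‖z‖ < 1) :
    HasDerivAt (blaschke w)
      ((1 - (starRingEnd ℂ) w * w) / (1 - (starRingEnd ℂ) w * z) ^ 2) z := by
  have h1 : HasDerivAt (fun z : ℂ => z - w) 1 z := (hasDerivAt_id z).sub_const w
  have h2 : HasDerivAt (fun z : ℂ => 1 - (starRingEnd ℂ) w * z) (-((starRingEnd ℂ) w)) z := by
    simpa using ((hasDerivAt_id z).const_mul ((starRingEnd ℂ) w)).const_sub 1
  refine (h1.div h2 (blaschke_denom_ne_zero hw hz)).congr_deriv ?_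
  congr 1
  ring

theorem one_sub_conj_mul_self (w : ℂ) :
    1 - (starRingEnd ℂ) w * w = ((1 - ‖w‖ ^ 2 : ℝ) : ℂ) := by
  rw [Complex.conj_mul']
  push_cast
  rfl

/-- Injective immersions of `U` into the unit disc sending `z₀` to the centre. -/
structure IsDiscEmbedding_s8 (U : Set ℂ) (z₀ : ℂ) (f : ℂ → ℂ) : Prop where
  differentiableOn : DifferentiableOn ℂ f U
  norm_lt_one : ∀ z ∈ U, ‖f z‖ < 1
  injOn : InjOn f U
  deriv_ne_zero : ∀ z ∈ U, deriv f z ≠ 0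
  map_base : f z₀ = 0

/-- The square-root trick: a disc embedding that omits a value of the disc is not extremal. -/
theorem IsDiscEmbedding_s8.exists_norm_deriv_lt {U : Set ℂ} {z₀ : ℂ} {f : ℂ → ℂ}
    (hf : IsDiscEmbedding_s8 U z₀ f) (hU : IsOpen U) (hUc : IsSimplyConnected U) (hz₀ : z₀ ∈ U)
    {w : ℂ} (hw : ‖w‖ < 1) (hwU : w ∉ f '' U) :
    ∃ h, IsDiscEmbedding_s8 U z₀ h ∧ ‖deriv f z₀‖ < ‖deriv h z₀‖ := by
  have hfd : ∀ z ∈ U, HasDerivAt f (deriv f z) z := fun z hz =>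
    (hf.differentiableOn.differentiableAt (hU.mem_nhds hz)).hasDerivAt
  have hbd : ∀ z ∈ U, HasDerivAt (fun z => blaschke w (f z)) _ z := fun z hz =>
    (hasDerivAt_blaschke hw (hf.norm_lt_one z hz)).comp z (hfd z hz)
  have hb0 : ∀ z ∈ U, blaschke w (f z) ≠ 0 := by
    intro z hz h0
    rw [blaschke, div_eq_zero_iff] at h0
    rcases h0 with h0 | h0
    · exact hwU ⟨z, hz, sub_eq_zero.1 h0⟩
    · exact blaschke_denom_ne_zero hw (hf.norm_lt_one z hz) h0
  obtain ⟨g, hgc, hg⟩ := Complex.exists_continuousOn_pow_eq hUc hU (n := 2)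
    (fun z hz => (hbd z hz).continuousAt.continuousWithinAt)
    (by rintro ⟨z, hz, h0⟩; exact hb0 z hz h0) two_ne_zero
  have hg0 : ∀ z ∈ U, g z ≠ 0 := by
    intro z hz h0
    apply hb0 z hz
    rw [← hg z, h0]
    simp
  have hg1 : ∀ z ∈ U, ‖g z‖ < 1 := by
    intro z hz
    have := norm_blaschke_lt_one hw (hf.norm_lt_one z hz)
    rw [← hg z, norm_pow] at this
    exact (pow_lt_one_iff_of_nonneg (norm_nonneg _) two_ne_zero).1 this
  have hgd : ∀ z ∈ U, HasDerivAt g ((2 * g z)⁻¹ * ((1 - (starRingEnd ℂ) w * w) /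
      (1 - (starRingEnd ℂ) w * f z) ^ 2 * deriv f z)) z := by
    intro z hz
    have h2 : 2 * g z ≠ 0 := mul_ne_zero two_ne_zero (hg0 z hz)
    have hloc : HasStrictDerivAt (fun v : ℂ => v ^ 2) (2 * g z) (g z) := by
      simpa using hasStrictDerivAt_pow 2 (g z)
    have hinv := hloc.to_localInverse h2
    have hev : ∀ᶠ v in 𝓝 z, hloc.localInverse _ _ _ h2 (blaschke w (f v)) = g v := by
      have hcont : ContinuousAt g z := hgc.continuousAt (hU.mem_nhds hz)
      filter_upwards [hcont.eventually
        (hloc.eventually_left_inverse h2)] with v hv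
      rw [← hg v]
      exact hv
    have hinv' := hinv.hasDerivAt
    simp only [hg z] at hinv'
    exact ((hinv'.comp z (hbd z hz)).congr_of_eventuallyEq
      (hev.mono fun v hv => hv.symm))
  have hw1 : (1 - (starRingEnd ℂ) w * w) ≠ 0 := blaschke_denom_ne_zero hw hw
  have hgd0 : ∀ z ∈ U, (2 * g z)⁻¹ * ((1 - (starRingEnd ℂ) w * w) /
      (1 - (starRingEnd ℂ) w * f z) ^ 2 * deriv f z) ≠ 0 := fun z hz =>
    mul_ne_zero (inv_ne_zero (mul_ne_zero two_ne_zero (hg0 z hz)))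
      (mul_ne_zero (div_ne_zero hw1 (pow_ne_zero 2
        (blaschke_denom_ne_zero hw (hf.norm_lt_one z hz)))) (hf.deriv_ne_zero z hz))
  have hhd : ∀ z ∈ U, HasDerivAt (fun z => blaschke (g z₀) (g z)) _ z := fun z hz =>
    (hasDerivAt_blaschke (hg1 z₀ hz₀) (hg1 z hz)).comp z (hgd z hz)
  refine ⟨fun z => blaschke (g z₀) (g z), ⟨fun z hz =>
    (hhd z hz).differentiableAt.differentiableWithinAt, fun z hz =>
    norm_blaschke_lt_one (hg1 z₀ hz₀) (hg1 z hz), ?_, ?_, by simp [blaschke]⟩, ?_⟩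
  · intro a ha b hb hab
    have h1 : g a = g b := blaschke_injOn (hg1 z₀ hz₀) (mem_ball_zero_iff.2 (hg1 a ha))
      (mem_ball_zero_iff.2 (hg1 b hb)) hab
    have h2 : blaschke w (f a) = blaschke w (f b) := by rw [← hg a, ← hg b, h1]
    exact hf.injOn ha hb (blaschke_injOn hw (mem_ball_zero_iff.2 (hf.norm_lt_one a ha))
      (mem_ball_zero_iff.2 (hf.norm_lt_one b hb)) h2)
  · intro z hz
    rw [(hhd z hz).deriv]
    exact mul_ne_zero (div_ne_zero (blaschke_denom_ne_zero (hg1 z₀ hz₀) (hg1 z₀ hz₀))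
      (pow_ne_zero 2 (blaschke_denom_ne_zero (hg1 z₀ hz₀) (hg1 z hz)))) (hgd0 z hz)
  · have hsq : ‖g z₀‖ ^ 2 = ‖w‖ := by
      rw [← norm_pow, hg z₀, hf.map_base]
      simp [blaschke]
    have hs0 : 0 < ‖g z₀‖ := norm_pos_iff.2 (hg0 z₀ hz₀)
    have hs1 := hg1 z₀ hz₀
    have hd0 : 0 < ‖deriv f z₀‖ := norm_pos_iff.2 (hf.deriv_ne_zero z₀ hz₀)
    rw [(hhd z₀ hz₀).deriv, hf.map_base]
    simp only [one_sub_conj_mul_self, mul_zero, sub_zero, norm_mul, norm_div, norm_inv, norm_pow,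
      Complex.norm_real, Real.norm_eq_abs, one_pow, div_one, Complex.norm_ofNat]
    rw [← hsq]
    set s := ‖g z₀‖
    set d := ‖deriv f z₀‖
    have h1 : 0 < 1 - s ^ 2 := by nlinarith
    have h2 : 0 < 1 - (s ^ 2) ^ 2 := by nlinarith
    rw [abs_of_pos h1, abs_of_pos h2]
    have h3 : (1 - s ^ 2) / (1 - s ^ 2) ^ 2 * ((2 * s)⁻¹ * ((1 - (s ^ 2) ^ 2) * d)) =
        (1 + s ^ 2) / (2 * s) * d := by
      field_simp
      ring
    rw [h3]
    refine lt_mul_of_one_lt_left hd0 ?_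
    rw [one_lt_div (by positivity)]
    nlinarith [sq_pos_of_pos (sub_pos.2 hs1)]

/-- Bounded open sets admit a disc embedding based at any of their points. -/
theorem exists_isDiscEmbedding {U : Set ℂ} (hb : Bornology.IsBounded U) (z₀ : ℂ) :
    ∃ f, IsDiscEmbedding_s8 U z₀ f := by
  obtain ⟨R, hR, hUR⟩ := hb.subset_ball_lt 0 z₀
  have hR' : (R : ℂ) ≠ 0 := by exact_mod_cast hR.ne'
  have hd : ∀ z : ℂ, HasDerivAt (fun z : ℂ => (z - z₀) / R) (1 / R) z := fun z =>
    ((hasDerivAt_id z).sub_const z₀).div_const _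
  refine ⟨fun z => (z - z₀) / R, fun z _ => (hd z).differentiableAt.differentiableWithinAt,
    fun z hz => ?_, fun a _ b _ hab => ?_, fun z _ => ?_, by simp⟩
  · have := hUR hz
    rw [mem_ball, dist_eq_norm] at this
    rw [norm_div, Complex.norm_real, Real.norm_of_nonneg hR.le, div_lt_one hR]
    exact this
  · simpa [hR'] using hab
  · rw [(hd z).deriv]
    exact one_div_ne_zero hR'

/-- Among the disc embeddings of `U` there is one with maximal derivative at the base point. -/
theorem exists_isDiscEmbedding_extremal {U : Set ℂ} {z₀ : ℂ} (hb : Bornology.IsBounded U)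
    (hU : IsOpen U) (hUc : IsPreconnected U) (hz₀ : z₀ ∈ U) :
    ∃ f, IsDiscEmbedding_s8 U z₀ f ∧ ∀ h, IsDiscEmbedding_s8 U z₀ h → ‖deriv h z₀‖ ≤ ‖deriv f z₀‖ := by
  set A : Set ℝ := (fun h => ‖deriv h z₀‖) '' {h | IsDiscEmbedding_s8 U z₀ h} with hA
  obtain ⟨e, he⟩ := exists_isDiscEmbedding hb z₀
  have hAne : A.Nonempty := ⟨_, e, he, rfl⟩
  have hAb : BddAbove A := by
    obtain ⟨r, hr, hrU⟩ := Metric.isOpen_iff.1 hU z₀ hz₀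
    refine ⟨1 / r, ?_⟩
    rintro _ ⟨h, hh, rfl⟩
    refine Complex.norm_deriv_le_div_of_mapsTo_ball (hh.differentiableOn.mono hrU)
      (fun z hz => ?_) hr
    rw [hh.map_base, mem_closedBall_zero_iff]
    exact (hh.norm_lt_one z (hrU hz)).le
  obtain ⟨u, -, hu, huA⟩ := exists_seq_tendsto_sSup hAne hAb
  choose F hF hFu using huA
  have hFd : ∀ n, DifferentiableOn ℂ (F n) U := fun n => (hF n).differentiableOn
  have hex : ∀ z, ∃ v, z ∈ U → Tendsto (F · z) (hyperfilter ℕ : Filter ℕ) (𝓝 v) := by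
    intro z
    by_cases hz : z ∈ U
    · obtain ⟨v, -, hv⟩ := (isCompact_closedBall (0 : ℂ) 1).ultrafilter_le_nhds
        ((hyperfilter ℕ).map (F · z)) (by
          rw [le_principal_iff, Ultrafilter.coe_map, mem_map]
          exact Eventually.of_forall fun n =>
            mem_closedBall_zero_iff.2 ((hF n).norm_lt_one z hz).le)
      exact ⟨v, fun _ => hv⟩
    · exact ⟨0, fun h => absurd h hz⟩
  choose f hf using hex
  have hlim : TendstoLocallyUniformlyOn F f (hyperfilter ℕ : Filter ℕ) U :=
    tendstoLocallyUniformlyOn_of_norm_le_one hU hFd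
      (fun n z hz => ((hF n).norm_lt_one z hz).le) hf
  have hfd : DifferentiableOn ℂ f U := hlim.differentiableOn (.of_forall hFd) hU
  have hfa : AnalyticOnNhd ℂ f U := hfd.analyticOnNhd hU
  have hdlim := hlim.deriv (.of_forall hFd) hU
  have hsup : ‖deriv f z₀‖ = sSup A := by
    refine tendsto_nhds_unique (hdlim.tendsto_at hz₀).norm
      ((hu.mono_left Nat.hyperfilter_le_atTop).congr fun n => ?_)
    exact (hFu n).symm
  have hmax : ∀ h, IsDiscEmbedding_s8 U z₀ h → ‖deriv h z₀‖ ≤ ‖deriv f z₀‖ := fun h hh =>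
    hsup ▸ le_csSup hAb ⟨h, hh, rfl⟩
  have hd0 : deriv f z₀ ≠ 0 := norm_pos_iff.1
    ((norm_pos_iff.2 (he.deriv_ne_zero z₀ hz₀)).trans_le (hmax e he))
  have hnc : ∀ a ∈ U, ¬ ∀ᶠ z in 𝓝 a, f z = f a := by
    intro a ha hev
    have h1 := hfa.eqOn_of_preconnected_of_eventuallyEq (analyticOnNhd_const (v := f a)) hUc ha hev
    have h2 : f =ᶠ[𝓝 z₀] fun _ => f a := h1.eventuallyEq_of_mem (hU.mem_nhds hz₀)
    rw [h2.deriv_eq, deriv_const] at hd0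
    exact hd0 rfl
  refine ⟨f, ⟨hfd, fun z hz => ?_, fun a ha b hb hab => ?_, fun a ha h0 => ?_, ?_⟩, hmax⟩
  · have hle : ∀ z ∈ U, ‖f z‖ ≤ 1 := fun z hz =>
      le_of_tendsto (hf z hz).norm (.of_forall fun n => ((hF n).norm_lt_one z hz).le)
    refine (hle z hz).lt_of_ne fun h1 => hnc z hz ?_
    exact Complex.eventually_eq_of_isLocalMax_norm
      ((hfd.eventually_differentiableAt (hU.mem_nhds hz)))
      ((hU.eventually_mem hz).mono fun w hw => by
        simpa [h1] using hle w hw)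
  · by_contra hne
    obtain ⟨V, W, hVo, hWo, haV, hbW, hVW⟩ := t2_separation hne
    have h1 := eventually_mem_image_of_tendstoLocallyUniformlyOn hU hFd hlim ha
      (inter_mem (hVo.mem_nhds haV) (hU.mem_nhds ha)) (hnc a ha)
    have h2 := eventually_mem_image_of_tendstoLocallyUniformlyOn hU hFd hlim hb
      (inter_mem (hWo.mem_nhds hbW) (hU.mem_nhds hb)) (hnc b hb)
    obtain ⟨n, ⟨v, hv, hva⟩, ⟨w, hw, hwb⟩⟩ := (h1.and h2).exists
    have hvw : v = w := (hF n).injOn hv.2 hw.2 (by rw [hva, hwb, hab])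
    exact disjoint_left.1 hVW hv.1 (hvw ▸ hw.1)
  · have hndc : ¬ ∀ᶠ z in 𝓝 a, deriv f z = deriv f a := by
      intro hev
      have h1 := hfa.deriv.eqOn_of_preconnected_of_eventuallyEq
        (analyticOnNhd_const (v := deriv f a)) hUc ha hev hz₀
      exact hd0 (h1.trans h0)
    have h1 := eventually_mem_image_of_tendstoLocallyUniformlyOn hU
      (fun n => (hFd n).deriv hU) hdlim ha (hU.mem_nhds ha) hndc
    obtain ⟨n, v, hv, hv0⟩ := h1.exists
    exact (hF n).deriv_ne_zero v hv (hv0.trans h0)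
  · refine tendsto_nhds_unique (hf z₀ hz₀) ?_
    simp only [(hF _).map_base]
    exact tendsto_const_nhds

/-- The **Riemann mapping theorem** for bounded domains. -/
theorem exists_riemann_map {U : Set ℂ} {z₀ : ℂ} (hb : Bornology.IsBounded U)
    (hU : IsOpen U) (hUc : IsSimplyConnected U) (hz₀ : z₀ ∈ U) :
    ∃ φ ψ : ℂ → ℂ, DifferentiableOn ℂ φ U ∧ DifferentiableOn ℂ ψ (ball 0 1) ∧
      MapsTo φ U (ball 0 1) ∧ MapsTo ψ (ball 0 1) U ∧ LeftInvOn ψ φ U ∧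
      RightInvOn ψ φ (ball 0 1) ∧ φ z₀ = 0 := by
  obtain ⟨f, hf, hmax⟩ := exists_isDiscEmbedding_extremal hb hU
    hUc.isPathConnected.isConnected.isPreconnected hz₀
  have hmaps : MapsTo f U (ball 0 1) := fun z hz => mem_ball_zero_iff.2 (hf.norm_lt_one z hz)
  have hsurj : SurjOn f U (ball 0 1) := by
    intro w hw
    by_contra hwU
    obtain ⟨h, hh, hlt⟩ := hf.exists_norm_deriv_lt hU hUc hz₀ (mem_ball_zero_iff.1 hw) hwU
    exact (hmax h hh).not_gt hlt
  have hleft : LeftInvOn (Function.invFunOn f U) f U := hf.injOn.leftInvOn_invFunOn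
  have hright : RightInvOn (Function.invFunOn f U) f (ball 0 1) := hsurj.rightInvOn_invFunOn
  refine ⟨f, Function.invFunOn f U, hf.differentiableOn, ?_, hmaps, hsurj.mapsTo_invFunOn, hleft,
    hright, hf.map_base⟩
  intro w hw
  obtain ⟨z, hz, rfl⟩ := hsurj hw
  have hs : HasStrictDerivAt f (deriv f z) z :=
    ((hf.differentiableOn.analyticAt (hU.mem_nhds hz)).contDiffAt (n := 1)).hasStrictDerivAt
      one_ne_zero
  have hinv := hs.to_local_left_inverse (hf.deriv_ne_zero z hz)
    (g := Function.invFunOn f U) ((hU.eventually_mem hz).mono fun v hv => hleft hv)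
  exact hinv.hasDerivAt.differentiableAt.differentiableWithinAt

/-- The quaternion with the given four real coordinates. -/
def quatOfCoords (r : Fin 4 → ℝ) : Quaternion ℝ := ⟨r 0, r 1, r 2, r 3⟩

@[simp] theorem quatOfCoords_re (r : Fin 4 → ℝ) : (quatOfCoords r).re = r 0 := rfl

@[simp] theorem quatOfCoords_imI (r : Fin 4 → ℝ) : (quatOfCoords r).imI = r 1 := rfl

@[simp] theorem quatOfCoords_imJ (r : Fin 4 → ℝ) : (quatOfCoords r).imJ = r 2 := rfl

@[simp] theorem quatOfCoords_imK (r : Fin 4 → ℝ) : (quatOfCoords r).imK = r 3 := rfl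

theorem quatBasis_eq_quatOfCoords (m : Fin 4) : quatBasis m = quatOfCoords (Pi.single m 1) := by
  fin_cases m <;> rfl

theorem sum_sliceValue_mul_quatBasis (J : Quaternion ℝ) (v : Fin 4 → ℂ) :
    ∑ m : Fin 4, sliceValue J (v m) * quatBasis m =
      quatOfCoords (fun m => (v m).re) + J * quatOfCoords (fun m => (v m).im) := by
  ext <;> simp [Fin.sum_univ_four, sliceValue, quatBasis_eq_quatOfCoords] <;> ring

theorem sum_sq_eq_zero_iff (v : Fin 4 → ℂ) :
    ∑ m, v m ^ 2 = 0 ↔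
      Quaternion.normSq (quatOfCoords fun m => (v m).re) =
          Quaternion.normSq (quatOfCoords fun m => (v m).im) ∧
        ((quatOfCoords fun m => (v m).re) * star (quatOfCoords fun m => (v m).im)).re = 0 := by
  rw [Complex.ext_iff, Quaternion.normSq_def', Quaternion.normSq_def']
  simp only [Fin.sum_univ_four, quatOfCoords_re, quatOfCoords_imI, quatOfCoords_imJ,
    quatOfCoords_imK, sq, Complex.add_re, Complex.add_im, Complex.mul_re,
    Complex.mul_im, Complex.zero_re, Complex.zero_im, Quaternion.re_mul, Quaternion.re_star,
    Quaternion.imI_star, Quaternion.imJ_star, Quaternion.imK_star]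
  constructor <;> rintro ⟨h1, h2⟩ <;> constructor <;> linarith

theorem quaternion_sq_eq_neg_one_iff (J : Quaternion ℝ) :
    J ^ 2 = -1 ↔ J.re = 0 ∧ Quaternion.normSq J = 1 := by
  constructor
  · intro h
    have h1 : Quaternion.normSq J ^ 2 = 1 := by rw [← map_pow, h]; simp
    have h2 : Quaternion.normSq J = 1 :=
      (pow_eq_one_iff_of_nonneg Quaternion.normSq_nonneg two_ne_zero).1 h1
    have h3 := congrArg (fun q : Quaternion ℝ => q.re) h
    rw [Quaternion.normSq_def'] at h2
    simp only [sq, Quaternion.re_mul, Quaternion.re_neg, Quaternion.re_one] at h3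
    exact ⟨by nlinarith [sq_nonneg J.re], by rw [Quaternion.normSq_def', h2]⟩
  · rintro ⟨h1, h2⟩
    have h3 : star J = -J := Quaternion.star_eq_neg.2 h1
    have h4 := Quaternion.self_mul_star J
    rw [h3, h2, mul_neg, ← sq] at h4
    rw [← neg_eq_iff_eq_neg, h4]
    rfl

/-- The slice function with coefficients `v` vanishes at some imaginary unit exactly when `v` is
isotropic for the complex quadratic form `∑ vₘ²`. -/
theorem forall_sum_sliceValue_ne_zero_iff (v : Fin 4 → ℂ) :
    (∀ J : Quaternion ℝ, J ^ 2 = -1 → ∑ m : Fin 4, sliceValue J (v m) * quatBasis m ≠ 0) ↔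
      ∑ m, v m ^ 2 ≠ 0 := by
  rw [Ne, sum_sq_eq_zero_iff]
  simp only [sum_sliceValue_mul_quatBasis, quaternion_sq_eq_neg_one_iff]
  generalize quatOfCoords (fun m => (v m).re) = a
  generalize quatOfCoords (fun m => (v m).im) = b
  constructor
  · rintro h ⟨h1, h2⟩
    rcases eq_or_ne b 0 with rfl | hb
    · have ha : a = 0 := by simpa using h1
      refine h (quatOfCoords (Pi.single 1 1)) ⟨rfl, by simp [Quaternion.normSq_def']⟩ (by simp [ha])
    · refine h (-(a * b⁻¹)) ⟨?_, ?_⟩ (by simp [hb])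
      · have : b⁻¹ = (Quaternion.normSq b)⁻¹ • star b := rfl
        rw [this, mul_smul_comm, Quaternion.re_neg, Quaternion.re_smul, h2]
        simp
      · rw [Quaternion.normSq_neg, map_mul, Quaternion.normSq_inv, h1,
          mul_inv_cancel₀ (Quaternion.normSq_ne_zero.2 hb)]
  · rintro h J ⟨h1, h2⟩ h0
    obtain rfl : a = -(J * b) := eq_neg_of_add_eq_zero_left h0
    refine h ⟨by simp [h2], ?_⟩
    rw [neg_mul, mul_assoc, Quaternion.self_mul_star, Quaternion.re_neg, Quaternion.mul_coe_eq_smul,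
      Quaternion.re_smul, h1]
    simp

/-- The complement of the isotropic cone in `ℂ⁴` is path-connected. -/
theorem isPathConnected_sum_sq_ne_zero :
    IsPathConnected {v : Fin 4 → ℂ | ∑ m, v m ^ 2 ≠ 0} := by
  refine ⟨Pi.single 0 1, by simp [Fin.sum_univ_four], fun {v} hv => ?_⟩
  set e : Fin 4 → ℂ := Pi.single 0 1
  have he : ∑ m, e m ^ 2 ≠ 0 := by simp [e, Fin.sum_univ_four]
  set P : Polynomial ℂ :=
    ∑ m, (Polynomial.C (e m) + Polynomial.X * Polynomial.C (v m - e m)) ^ 2 with hP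
  have heval : ∀ s, P.eval s = ∑ m, (e m + s * (v m - e m)) ^ 2 := by
    intro s
    simp [hP, Polynomial.eval_finsetSum]
  have hP0 : P ≠ 0 := by
    intro h
    have := heval 0
    rw [h] at this
    apply he
    simpa using this.symm
  have hpc : IsPathConnected ({s | P.IsRoot s}ᶜ : Set ℂ) :=
    (Polynomial.finite_setOfPred_isRoot hP0).countable.isPathConnected_compl_of_one_lt_rank
      (by simp [Complex.rank_real_complex])
  have hj := hpc.joinedIn 0 (by simpa [heval] using he) 1 (by simpa [heval] using hv)
  have hcont : Continuous fun s : ℂ => fun m => e m + s * (v m - e m) := by fun_prop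
  have hmap := hj.map_continuousOn (f := fun s : ℂ => fun m => e m + s * (v m - e m))
    hcont.continuousOn
  simp only [zero_mul, add_zero, one_mul, add_sub_cancel] at hmap
  refine hmap.mono ?_
  rintro _ ⟨s, hs, rfl⟩
  simpa [heval] using hs

/-- Quadruples of holomorphic Schwarz symmetric functions on `D` on which the quadratic form
`∑ fₘ²` is nowhere zero. -/
def anisotropicQuadruples (D : Set ℂ) : Set (Fin 4 → C(D, ℂ)) :=
  {F | (∀ m : Fin 4, ∃ f : ℂ → ℂ, DifferentiableOn ℂ f D ∧
      (∀ z ∈ D, f ((starRingEnd ℂ) z) = (starRingEnd ℂ) (f z)) ∧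
      ∀ z : D, F m z = f (z : ℂ)) ∧
    ∀ z : D, ∑ m, F m z ^ 2 ≠ 0}

/-- Precomposition with a holomorphic Schwarz symmetric homotopy ending at the identity joins
quadruples inside `anisotropicQuadruples D`. -/
theorem joinedIn_anisotropicQuadruples_of_homotopy {D : Set ℂ} {Φ : unitInterval → ℂ → ℂ}
    (hcont : ContinuousOn (Function.uncurry Φ) (univ ×ˢ D)) (hmaps : ∀ t, MapsTo (Φ t) D D)
    (hdiff : ∀ t, DifferentiableOn ℂ (Φ t) D)
    (hsymm : ∀ t, ∀ z ∈ D, Φ t ((starRingEnd ℂ) z) = (starRingEnd ℂ) (Φ t z))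
    (hone : ∀ z ∈ D, Φ 1 z = z) {F G : Fin 4 → C(D, ℂ)} (hF : F ∈ anisotropicQuadruples D)
    (hG : ∀ m, ∀ z : D, G m z = F m ⟨Φ 0 z, hmaps 0 z.2⟩) :
    JoinedIn (anisotropicQuadruples D) G F := by
  let H : C(unitInterval × D, D) :=
    ⟨fun p => ⟨Φ p.1 p.2, hmaps p.1 p.2.2⟩, by
      refine Continuous.subtype_mk ?_ _
      exact hcont.comp_continuous (f := fun p : unitInterval × D => (p.1, (p.2 : ℂ)))
        (by fun_prop) fun p => ⟨mem_univ _, p.2.2⟩⟩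
  refine ⟨⟨⟨fun t m => (F m).comp (H.curry t), ?_⟩, ?_, ?_⟩, fun t => ⟨fun m => ?_, fun z => ?_⟩⟩
  · refine continuous_pi fun m => ?_
    exact (ContinuousMap.continuous_postcomp (F m)).comp H.curry.continuous
  · funext m
    ext z
    exact (hG m z).symm
  · funext m
    ext z
    exact congrArg (F m) (Subtype.ext (hone z z.2))
  · obtain ⟨f, hf, hfs, hFf⟩ := hF.1 m
    refine ⟨f ∘ Φ t, hf.comp (hdiff t) (hmaps t), fun z hz => ?_, fun z => hFf _⟩
    rw [Function.comp_apply, hsymm t z hz, hfs _ (hmaps t hz), Function.comp_apply]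
  · exact hF.2 _

/-- A biholomorphic change of coordinate to the disc, sending a real point to `0`, turns radial
contraction into a Schwarz symmetric map. -/
theorem conj_riemann_contraction {U : Set ℂ} {z₀ : ℂ} {φ ψ : ℂ → ℂ} (hU : IsOpen U)
    (hφ : DifferentiableOn ℂ φ U) (hψ : DifferentiableOn ℂ ψ (ball 0 1))
    (hφm : MapsTo φ U (ball 0 1)) (hψm : MapsTo ψ (ball 0 1) U) (hl : LeftInvOn ψ φ U)
    (hr : RightInvOn ψ φ (ball 0 1)) (hφ0 : φ z₀ = 0) (hz₀ : z₀ ∈ U)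
    (hconj : MapsTo (starRingEnd ℂ) U U) (hreal : (starRingEnd ℂ) z₀ = z₀) {t : ℝ}
    (ht : t ∈ Icc (0 : ℝ) 1) {z : ℂ} (hz : z ∈ U) :
    ψ (t * φ ((starRingEnd ℂ) z)) = (starRingEnd ℂ) (ψ (t * φ z)) := by
  have hball : ∀ {w : ℂ}, (starRingEnd ℂ) w ∈ ball (0 : ℂ) 1 ↔ w ∈ ball (0 : ℂ) 1 := by simp
  have htball : ∀ {w : ℂ}, w ∈ ball (0 : ℂ) 1 → (t : ℂ) * w ∈ ball (0 : ℂ) 1 := by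
    intro w hw
    rw [mem_ball_zero_iff] at hw ⊢
    rw [norm_mul, Complex.norm_real, Real.norm_of_nonneg ht.1]
    nlinarith [norm_nonneg w, ht.1, ht.2]
  have hψ0 : ψ 0 = z₀ := by rw [← hφ0, hl hz₀]
  set α : ℂ → ℂ := fun w => (starRingEnd ℂ) (φ ((starRingEnd ℂ) (ψ w))) with hα
  set β : ℂ → ℂ := fun w => φ ((starRingEnd ℂ) (ψ ((starRingEnd ℂ) w))) with hβ
  have hα0 : α 0 = 0 := by simp [hα, hψ0, hreal, hφ0]
  have hβ0 : β 0 = 0 := by simp [hβ, hψ0, hreal, hφ0]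
  have hαm : MapsTo α (ball 0 1) (ball 0 1) := fun w hw => hball.2 (hφm (hconj (hψm hw)))
  have hβm : MapsTo β (ball 0 1) (ball 0 1) := fun w hw => hφm (hconj (hψm (hball.2 hw)))
  have hαβ : ∀ w ∈ ball (0 : ℂ) 1, α (β w) = w := by
    intro w hw
    simp only [hα, hβ]
    rw [hl (hconj (hψm (hball.2 hw))), Complex.conj_conj, hr (hball.2 hw), Complex.conj_conj]
  have hαd : DifferentiableOn ℂ α (ball 0 1) := by
    intro w hw
    have h1 := (hφ.differentiableAt (hU.mem_nhds (hconj (hψm hw)))).conj_conj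
    rw [Complex.conj_conj] at h1
    exact (h1.comp w (hψ.differentiableAt (isOpen_ball.mem_nhds hw))).differentiableWithinAt
  have hβd : DifferentiableOn ℂ β (ball 0 1) := by
    intro w hw
    have hw' := hball.2 hw
    have h1 := (hψ.differentiableAt (isOpen_ball.mem_nhds hw')).conj_conj
    rw [Complex.conj_conj] at h1
    exact ((hφ.differentiableAt (hU.mem_nhds (hconj (hψm hw')))).comp w h1).differentiableWithinAt
  obtain ⟨C, hC⟩ : ∃ C : ℂ, ∀ w ∈ ball (0 : ℂ) 1, α w = w * C := by
    have hhalf : (1 / 2 : ℂ) ∈ ball (0 : ℂ) 1 := by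
      rw [mem_ball_zero_iff]; norm_num
    set p := β (1 / 2) with hp
    have hpb : p ∈ ball (0 : ℂ) 1 := hβm hhalf
    have hαp : α p = 1 / 2 := hαβ _ hhalf
    have hp0 : p ≠ 0 := by
      intro h
      rw [h, hα0] at hαp
      norm_num at hαp
    have h1 : ‖p‖ ≤ ‖(1 / 2 : ℂ)‖ :=
      Complex.norm_le_norm_of_mapsTo_ball hβd (hβm.mono_right ball_subset_closedBall) hβ0
        (mem_ball_zero_iff.1 hhalf)
    have h2 : ‖α p‖ ≤ ‖p‖ :=
      Complex.norm_le_norm_of_mapsTo_ball hαd (hαm.mono_right ball_subset_closedBall) hα0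
        (mem_ball_zero_iff.1 hpb)
    have h3 : ‖dslope α 0 p‖ = 1 / 1 := by
      rw [dslope_of_ne _ hp0, slope_def_field, hα0, sub_zero, sub_zero, norm_div,
        h2.antisymm (by rw [hαp]; exact h1), div_self (norm_ne_zero_iff.2 hp0), div_one]
    obtain ⟨C, -, hC⟩ := Complex.affine_of_mapsTo_ball_of_exists_norm_dslope_eq_div' hαd
      (by rw [hα0]; exact hαm.mono_right ball_subset_closedBall) ⟨p, hpb, h3⟩
    exact ⟨C, fun w hw => by simpa [hα0] using hC hw⟩
  have hfin : φ ((starRingEnd ℂ) (ψ (t * φ z))) = t * φ ((starRingEnd ℂ) z) := by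
    have h1 := hC _ (htball (hφm hz))
    have h2 := hC _ (hφm hz)
    rw [mul_assoc, ← h2] at h1
    simp only [hα] at h1
    rw [hl hz] at h1
    have := congrArg (starRingEnd ℂ) h1
    simpa using this
  rw [← hfin, hl (hconj (hψm (htball (hφm hz))))]

/-- A bounded simply connected open set contracts holomorphically to any of its points, and the
contraction is Schwarz symmetric if the set is symmetric and the point is real. -/
theorem exists_holomorphic_contraction_s8 {U : Set ℂ} {z₀ : ℂ} (hb : Bornology.IsBounded U)
    (hU : IsOpen U) (hUc : IsSimplyConnected U) (hz₀ : z₀ ∈ U) :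
    ∃ θ : unitInterval → ℂ → ℂ, ContinuousOn (Function.uncurry θ) (univ ×ˢ U) ∧
      (∀ t, MapsTo (θ t) U U) ∧ (∀ t, DifferentiableOn ℂ (θ t) U) ∧ (∀ z ∈ U, θ 1 z = z) ∧
      (∀ z ∈ U, θ 0 z = z₀) ∧
      (MapsTo (starRingEnd ℂ) U U → (starRingEnd ℂ) z₀ = z₀ →
        ∀ t, ∀ z ∈ U, θ t ((starRingEnd ℂ) z) = (starRingEnd ℂ) (θ t z)) := by
  obtain ⟨φ, ψ, hφ, hψ, hφm, hψm, hl, hr, hφ0⟩ := exists_riemann_map hb hU hUc hz₀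
  have hball : ∀ (t : unitInterval) {z : ℂ}, z ∈ U → ((t : ℝ) : ℂ) * φ z ∈ ball (0 : ℂ) 1 := by
    intro t z hz
    have hw := hφm hz
    rw [mem_ball_zero_iff] at hw ⊢
    rw [norm_mul, Complex.norm_real, Real.norm_of_nonneg t.2.1]
    nlinarith [norm_nonneg (φ z), t.2.1, t.2.2]
  refine ⟨fun t z => ψ ((t : ℝ) * φ z), ?_, fun t z hz => hψm (hball t hz), fun t => ?_,
    fun z hz => by simp [hl hz], fun z _ => ?_, fun hconj hreal t z hz =>
      conj_riemann_contraction hU hφ hψ hφm hψm hl hr hφ0 hz₀ hconj hreal t.2 hz⟩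
  · refine hψ.continuousOn.comp (f := fun p : unitInterval × ℂ => ((p.1 : ℝ) : ℂ) * φ p.2) ?_
      fun p hp => hball p.1 hp.2
    refine ContinuousOn.mul (by fun_prop) ?_
    exact hφ.continuousOn.comp continuousOn_snd fun p hp => hp.2
  · exact hψ.comp (hφ.const_mul _) fun z hz => hball t hz
  · have h0 : ψ 0 = z₀ := by rw [← hφ0, hl hz₀]
    simp [h0]

theorem isBounded_of_closure_homeomorph_closedBall {U : Set ℂ}
    (h : Nonempty (closure U ≃ₜ closedBall (0 : ℂ) 1)) : Bornology.IsBounded U := by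
  obtain ⟨e⟩ := h
  have : CompactSpace (closedBall (0 : ℂ) 1) :=
    isCompact_iff_compactSpace.1 (isCompact_closedBall 0 1)
  have : CompactSpace (closure U) := e.symm.compactSpace
  exact (isCompact_iff_compactSpace.2 this).isBounded.subset subset_closure

theorem isPathConnected_anisotropicQuadruples_of_real_mem {D : Set ℂ} (hb : Bornology.IsBounded D)
    (hD : IsOpen D) (hDc : IsSimplyConnected D) (hconj : MapsTo (starRingEnd ℂ) D D) {x : ℂ}
    (hx : x ∈ D) (hreal : (starRingEnd ℂ) x = x) :
    IsPathConnected (anisotropicQuadruples D) := by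
  obtain ⟨θ, hcont, hmaps, hdiff, hone, hzero, hsymm⟩ := exists_holomorphic_contraction_s8 hb hD hDc hx
  let c : (Fin 4 → ℝ) → Fin 4 → C(D, ℂ) := fun v m => ContinuousMap.const D (v m : ℂ)
  have hc : Continuous c := continuous_pi fun m =>
    ContinuousMap.continuous_const'.comp (by fun_prop)
  have hpc : IsPathConnected ({0}ᶜ : Set (Fin 4 → ℝ)) :=
    isPathConnected_compl_singleton_of_one_lt_rank (by simp) 0
  have hcmem : ∀ v ∈ ({0}ᶜ : Set (Fin 4 → ℝ)), c v ∈ anisotropicQuadruples D := by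
    intro v hv
    refine ⟨fun m => ⟨fun _ => (v m : ℂ), by fun_prop, by simp, fun z => rfl⟩, fun z h => hv ?_⟩
    have h' : ∑ m, v m ^ 2 = 0 := by
      have h0 : ∑ m, (v m : ℂ) ^ 2 = 0 := h
      exact_mod_cast h0
    funext m
    simpa using (Finset.sum_eq_zero_iff_of_nonneg fun m _ => sq_nonneg (v m)).1 h' m
  obtain ⟨e, he⟩ := hpc.nonempty
  refine ⟨c e, hcmem e he, fun {F} hF => ?_⟩
  set v : Fin 4 → ℝ := fun m => (F m ⟨x, hx⟩).re with hv
  have hFv : ∀ m, F m ⟨x, hx⟩ = (v m : ℂ) := by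
    intro m
    obtain ⟨f, -, hfs, hFf⟩ := hF.1 m
    have := hfs x hx
    rw [hreal] at this
    rw [← hFf ⟨x, hx⟩] at this
    exact (Complex.conj_eq_iff_re.1 this.symm).symm
  have hv0 : v ∈ ({0}ᶜ : Set (Fin 4 → ℝ)) := by
    intro h
    apply hF.2 ⟨x, hx⟩
    simp [hFv, mem_singleton_iff.1 h]
  refine (((hpc.joinedIn e he v hv0).map_continuousOn hc.continuousOn).mono ?_).trans
    (joinedIn_anisotropicQuadruples_of_homotopy hcont hmaps hdiff (hsymm hconj hreal) hone hF ?_)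
  · rintro _ ⟨w, hw, rfl⟩
    exact hcmem w hw
  · intro m z
    have : (⟨θ 0 z, hmaps 0 z.2⟩ : D) = ⟨x, hx⟩ := Subtype.ext (hzero z z.2)
    rw [this, hFv]
    rfl

theorem isPathConnected_anisotropicQuadruples_union_conj {U : Set ℂ} (hb : Bornology.IsBounded U)
    (hU : IsOpen U) (hUc : IsSimplyConnected U) (hpos : ∀ z ∈ U, 0 < z.im) {z₀ : ℂ}
    (hz₀ : z₀ ∈ U) :
    IsPathConnected (anisotropicQuadruples (U ∪ (starRingEnd ℂ) '' U)) := by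
  obtain ⟨θ, hcont, hmaps, hdiff, hone, hzero, -⟩ := exists_holomorphic_contraction_s8 hb hU hUc hz₀
  have hVeq : (starRingEnd ℂ) '' U = (starRingEnd ℂ) ⁻¹' U :=
    congrFun (image_eq_preimage_of_inverse Complex.conj_conj Complex.conj_conj) U
  rw [hVeq]
  set V := (starRingEnd ℂ) ⁻¹' U with hV
  have hVo : IsOpen V := hU.preimage Complex.continuous_conj
  have hneg : ∀ z ∈ V, ¬ 0 < z.im := by
    intro z hz
    have := hpos _ hz
    rw [Complex.conj_im] at this
    linarith
  have hUV : ∀ z ∈ U, (starRingEnd ℂ) z ∈ V := fun z hz => by simpa [hV] using hz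
  set D := U ∪ V with hD
  have hclopen : IsClopen {z : D | 0 < (z : ℂ).im} := by
    refine ⟨?_, isOpen_lt continuous_const (by fun_prop)⟩
    have : {z : D | 0 < (z : ℂ).im} = {z : D | 0 ≤ (z : ℂ).im} := by
      ext z
      simp only [mem_ofPred_eq]
      refine ⟨le_of_lt, fun h => ?_⟩
      rcases z.2 with hz | hz
      · exact hpos _ hz
      · have := hpos _ hz
        rw [Complex.conj_im] at this
        linarith
    rw [this]
    exact isClosed_le continuous_const (by fun_prop)
  have hccont : ∀ m, Continuous fun p : (Fin 4 → ℂ) × D =>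
      if 0 < (p.2 : ℂ).im then p.1 m else (starRingEnd ℂ) (p.1 m) := by
    intro m
    refine Continuous.if (fun p hp => ?_) (by fun_prop) (by fun_prop)
    have := (hclopen.preimage (continuous_snd (X := Fin 4 → ℂ))).frontier_eq
    exact absurd (this ▸ hp : p ∈ (∅ : Set _)) (notMem_empty p)
  let c : (Fin 4 → ℂ) → Fin 4 → C(D, ℂ) := fun v m =>
    ⟨fun z => if 0 < (z : ℂ).im then v m else (starRingEnd ℂ) (v m),
      (hccont m).comp (Continuous.prodMk_right v)⟩
  have hc : Continuous c := continuous_pi fun m =>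
    ContinuousMap.continuous_of_continuous_uncurry _ (hccont m)
  have hcmem : ∀ v ∈ {v : Fin 4 → ℂ | ∑ m, v m ^ 2 ≠ 0}, c v ∈ anisotropicQuadruples D := by
    intro v hv
    refine ⟨fun m => ⟨fun z => if 0 < z.im then v m else (starRingEnd ℂ) (v m), ?_, ?_,
      fun z => rfl⟩, fun z => ?_⟩
    · refine DifferentiableOn.union_of_isOpen ?_ ?_ hU hVo
      · exact (differentiableOn_const (v m)).congr fun z hz => if_pos (hpos z hz)
      · exact (differentiableOn_const ((starRingEnd ℂ) (v m))).congr fun z hz => if_neg (hneg z hz)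
    · rintro z (hz | hz)
      · simp only [if_pos (hpos z hz), if_neg (hneg _ (hUV z hz))]
      · simp only [if_neg (hneg z hz), if_pos (hpos _ hz), Complex.conj_conj]
    · by_cases hz : 0 < (z : ℂ).im
      · simpa [c, hz] using hv
      · simp only [c, ContinuousMap.coe_mk, hz, if_false]
        intro h
        apply hv
        have := congrArg (starRingEnd ℂ) h
        simpa using this
  let Φ : unitInterval → ℂ → ℂ := fun t z =>
    if 0 < z.im then θ t z else (starRingEnd ℂ) (θ t ((starRingEnd ℂ) z))
  have hΦU : ∀ t, ∀ z ∈ U, Φ t z = θ t z := fun t z hz => if_pos (hpos z hz)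
  have hΦV : ∀ t, ∀ z ∈ V, Φ t z = (starRingEnd ℂ) (θ t ((starRingEnd ℂ) z)) :=
    fun t z hz => if_neg (hneg z hz)
  have hΦcont : ContinuousOn (Function.uncurry Φ) (univ ×ˢ D) := by
    rw [hD, prod_union]
    refine ContinuousOn.union_of_isOpen ?_ ?_ (isOpen_univ.prod hU) (isOpen_univ.prod hVo)
    · exact hcont.congr fun p hp => hΦU p.1 p.2 hp.2
    · have h1 : ContinuousOn (fun p : unitInterval × ℂ =>
          (starRingEnd ℂ) (Function.uncurry θ (p.1, (starRingEnd ℂ) p.2))) (univ ×ˢ V) :=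
        Complex.continuous_conj.comp_continuousOn
          (hcont.comp (by fun_prop) fun p hp => ⟨mem_univ _, hp.2⟩)
      exact h1.congr fun p hp => hΦV p.1 p.2 hp.2
  have hΦmaps : ∀ t, MapsTo (Φ t) D D := by
    rintro t z (hz | hz)
    · rw [hΦU t z hz]
      exact Or.inl (hmaps t hz)
    · rw [hΦV t z hz]
      exact Or.inr (hUV _ (hmaps t hz))
  have hΦdiff : ∀ t, DifferentiableOn ℂ (Φ t) D := by
    intro t
    refine DifferentiableOn.union_of_isOpen ((hdiff t).congr (hΦU t)) ?_ hU hVo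
    refine DifferentiableOn.congr (fun z hz => ?_) (hΦV t)
    have := ((hdiff t).differentiableAt (hU.mem_nhds hz)).conj_conj
    rw [Complex.conj_conj] at this
    exact this.differentiableWithinAt
  have hΦsymm : ∀ t, ∀ z ∈ D, Φ t ((starRingEnd ℂ) z) = (starRingEnd ℂ) (Φ t z) := by
    rintro t z (hz | hz)
    · rw [hΦU t z hz, hΦV t _ (hUV z hz), Complex.conj_conj]
    · rw [hΦV t z hz, hΦU t _ hz, Complex.conj_conj]
  have hΦone : ∀ z ∈ D, Φ 1 z = z := by
    rintro z (hz | hz)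
    · rw [hΦU 1 z hz, hone z hz]
    · rw [hΦV 1 z hz, hone _ hz, Complex.conj_conj]
  have he := isPathConnected_sum_sq_ne_zero
  obtain ⟨e, hmem⟩ := he.nonempty
  refine ⟨c e, hcmem e hmem, fun {F} hF => ?_⟩
  refine (((he.joinedIn e hmem (fun m => F m ⟨z₀, Or.inl hz₀⟩) (hF.2 _)).map_continuousOn
    hc.continuousOn).mono ?_).trans
    (joinedIn_anisotropicQuadruples_of_homotopy hΦcont hΦmaps hΦdiff hΦsymm hΦone hF ?_)
  · rintro _ ⟨w, hw, rfl⟩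
    exact hcmem w hw
  · rintro m ⟨z, hz | hz⟩
    · have h1 : (⟨Φ 0 z, hΦmaps 0 (Or.inl hz)⟩ : D) = ⟨z₀, Or.inl hz₀⟩ :=
        Subtype.ext ((hΦU 0 z hz).trans (hzero z hz))
      rw [h1]
      exact if_pos (hpos z hz)
    · have h1 : (⟨Φ 0 z, hΦmaps 0 (Or.inr hz)⟩ : D) =
          ⟨(starRingEnd ℂ) z₀, Or.inr (hUV z₀ hz₀)⟩ :=
        Subtype.ext ((hΦV 0 z hz).trans (congrArg _ (hzero _ hz)))
      obtain ⟨f, -, hfs, hFf⟩ := hF.1 m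
      rw [h1, hFf, hfs z₀ (Or.inl hz₀), ← hFf ⟨z₀, Or.inl hz₀⟩]
      exact if_neg (hneg z hz)

end

/-- For a basic symmetric planar domain `D` with closed-disc closure (slice or
product type), the set of quadruples `(f₀,f₁,f₂,f₃)` of holomorphic Schwarz symmetric
functions on `D` such that the associated slice-regular quaternionic function
`f₀ + f₁ i + f₂ j + f₃ k` is nowhere zero, with the topology of componentwise uniform
convergence on compact subsets of `D`, is path-connected. -/
theorem slice_regular_nonvanishing_pathConnected (D : Set ℂ)
    (hbasic :
      (D.Nonempty ∧ IsOpen D ∧ IsConnected D ∧ SimplyConnectedSpace D ∧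
        (∃ x ∈ D, x.im = 0) ∧ (starRingEnd ℂ) '' D = D ∧
        Nonempty (closure D ≃ₜ closedBall (0 : ℂ) 1)) ∨
      (∃ U : Set ℂ, U.Nonempty ∧ IsOpen U ∧ IsConnected U ∧ SimplyConnectedSpace U ∧
        (∀ z ∈ U, 0 < z.im) ∧ Nonempty (closure U ≃ₜ closedBall (0 : ℂ) 1) ∧
        D = U ∪ (starRingEnd ℂ) '' U)) :
    IsPathConnected
      {F : Fin 4 → C(D, ℂ) |
        (∀ m : Fin 4, ∃ f : ℂ → ℂ, DifferentiableOn ℂ f D ∧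
          (∀ z ∈ D, f ((starRingEnd ℂ) z) = (starRingEnd ℂ) (f z)) ∧
          ∀ z : D, F m z = f (z : ℂ)) ∧
        ∀ z : D, ∀ J : Quaternion ℝ, J ^ 2 = -1 →
          (∑ m : Fin 4, sliceValue J (F m z) * quatBasis m) ≠ 0} := by
  have hset : {F : Fin 4 → C(D, ℂ) |
        (∀ m : Fin 4, ∃ f : ℂ → ℂ, DifferentiableOn ℂ f D ∧
          (∀ z ∈ D, f ((starRingEnd ℂ) z) = (starRingEnd ℂ) (f z)) ∧
          ∀ z : D, F m z = f (z : ℂ)) ∧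
        ∀ z : D, ∀ J : Quaternion ℝ, J ^ 2 = -1 →
          (∑ m : Fin 4, sliceValue J (F m z) * quatBasis m) ≠ 0} = anisotropicQuadruples D := by
    ext F
    exact and_congr_right fun _ => forall_congr' fun z =>
      forall_sum_sliceValue_ne_zero_iff fun m => F m z
  rw [hset]
  rcases hbasic with ⟨-, hD, -, hsc, ⟨x, hx, hxim⟩, hconj, hcl⟩ |
    ⟨U, ⟨z₀, hz₀⟩, hU, -, hsc, hpos, hcl, rfl⟩
  · exact isPathConnected_anisotropicQuadruples_of_real_mem
      (isBounded_of_closure_homeomorph_closedBall hcl) hD hsc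
      (mapsTo_iff_image_subset.2 hconj.subset) hx (Complex.conj_eq_iff_im.2 hxim)
  · exact isPathConnected_anisotropicQuadruples_union_conj
      (isBounded_of_closure_homeomorph_closedBall hcl) hU hsc
      hpos hz₀
end
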